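/- If A is an ordered abelian group and B is an ordered semi-field, then A ⊼ B is an ordered semi-field: it is an ordered commutative semi-ring in which every nonzero element has a multiplicative inverse; explicitly, the multiplicative inverse of (g,s) is (−g, s̄), where s̄ is the multiplicative inverse of s in B. -/

import Mathlib

/-!
The nonzero part `B∖{0}` is closed under addition, because `0 < t ≤ s + t`, and under
multiplication, because a product of invertible elements is invertible. So on nonzero elements the
operations of the insertion are total: multiplication is that of the product `A × (B∖{0})`, and
addition is a maximum on the `A`-component combined with addition in `B` on ties. Associativity of
addition and the bound `y ≤ x + y` follow by comparing `A`-components. Distributivity holds because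
translation by a group element is strictly monotone, so multiplication by `(g, s)` does not change
the comparison that governs the sum.
-/

/-- `G` (with its linear order) is an ordered abelian semi-group with respect to
`add` and `zero`. -/
def IsOrdAbSemigroup {G : Type*} [LinearOrder G] (add : G → G → G) (zero : G) : Prop :=
  (∀ a b c : G, add (add a b) c = add a (add b c)) ∧
  (∀ a : G, add zero a = a) ∧ (∀ a : G, add a zero = a) ∧
  (∀ a b : G, add a b = add b a) ∧
  (∀ a : G, zero ≤ a) ∧ (∀ a b : G, b ≤ add a b)

/-- `G` (with its linear order) is an ordered abelian group with respect to
`add`, `zero`, `neg`. -/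
def IsOrdAbGroup {G : Type*} [LinearOrder G] (add : G → G → G) (zero : G) (neg : G → G) : Prop :=
  (∀ a b c : G, add (add a b) c = add a (add b c)) ∧
  (∀ a : G, add zero a = a) ∧ (∀ a : G, add a zero = a) ∧
  (∀ a b : G, add a b = add b a) ∧
  (∀ a : G, add (neg a) a = zero) ∧
  (∀ a b c : G, a ≤ b → add c a ≤ add c b)

/-- `G` is an ordered commutative semi-ring with respect to `add`, `mul`, `zero`, `one`. -/
def IsOrdCommSemiring {G : Type*} [LinearOrder G]
    (add mul : G → G → G) (zero one : G) : Prop :=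
  IsOrdAbSemigroup add zero ∧
  (∀ a b : G, mul a b = mul b a) ∧
  (∀ a b c : G, mul (mul a b) c = mul a (mul b c)) ∧
  (∀ a : G, mul one a = a) ∧ (∀ a : G, mul a one = a) ∧
  (∀ a b c : G, mul a (add b c) = add (mul a b) (mul a c)) ∧
  (∀ a : G, mul zero a = zero) ∧ (∀ a : G, mul a zero = zero)

/-- The carrier `(A × (B∖{0})) ∪ {0}` of the insertion `A ⊼ B`;
`none` is the (new) zero element. -/
abbrev Ins (A : Type*) {B : Type*} (zB : B) : Type _ := Option (A × {b : B // b ≠ zB})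

/-- The order on `A ⊼ B`. -/
def insLt {A B : Type*} [LT A] [LT B] (zB : B) : Ins A zB → Ins A zB → Prop
  | none, none => False
  | none, some _ => True
  | some _, none => False
  | some x, some y => x.1 < y.1 ∨ (x.1 = y.1 ∧ x.2.1 < y.2.1)

def insLe {A B : Type*} [LT A] [LT B] (zB : B) (x y : Ins A zB) : Prop :=
  insLt zB x y ∨ x = y

open Classical in
/-- The addition of `A ⊼ B`. -/
noncomputable def insAdd {A B : Type*} [LinearOrder A] (addB : B → B → B) (zB : B) :
    Ins A zB → Ins A zB → Ins A zB
  | none, y => y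
  | x, none => x
  | some x, some y =>
    if x.1 < y.1 then some y
    else if y.1 < x.1 then some x
    else if h : addB x.2.1 y.2.1 = zB then none
    else some (x.1, ⟨addB x.2.1 y.2.1, h⟩)

open Classical in
/-- The multiplication of `A ⊼ B`: `(g,s)(h,t) = (g+h, st)` and `0·x = x·0 = 0`. -/
noncomputable def insMul {A B : Type*} (addA : A → A → A) (mulB : B → B → B) (zB : B) :
    Ins A zB → Ins A zB → Ins A zB
  | none, _ => none
  | _, none => none
  | some x, some y =>
    if h : mulB x.2.1 y.2.1 = zB then none
    else some (addA x.1 y.1, ⟨mulB x.2.1 y.2.1, h⟩)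

theorem insAdd_none_left {A B : Type*} [LinearOrder A] (addB : B → B → B) (zB : B)
    (y : Ins A zB) : insAdd addB zB none y = y := by
  cases y <;> rfl

theorem insAdd_none_right {A B : Type*} [LinearOrder A] (addB : B → B → B) (zB : B)
    (x : Ins A zB) : insAdd addB zB x none = x := by
  cases x <;> rfl

theorem insMul_none_left {A B : Type*} (addA : A → A → A) (mulB : B → B → B) (zB : B)
    (y : Ins A zB) : insMul addA mulB zB none y = none := by
  cases y <;> rfl

theorem insMul_none_right {A B : Type*} (addA : A → A → A) (mulB : B → B → B) (zB : B)
    (x : Ins A zB) : insMul addA mulB zB x none = none := by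
  cases x <;> rfl

/-- When `B∖{0}` is closed under addition, a sum of two nonzero elements never collapses to `0`. -/
theorem insAdd_some {A B : Type*} [LinearOrder A] (addB : B → B → B) (zB : B)
    (h : ∀ s t : B, s ≠ zB → t ≠ zB → addB s t ≠ zB) (g k : A) (s t : {b : B // b ≠ zB}) :
    insAdd addB zB (some (g, s)) (some (k, t)) =
      if g < k then some (k, t) else if k < g then some (g, s)
      else some (g, ⟨addB s.1 t.1, h s.1 t.1 s.2 t.2⟩) := by
  simp [insAdd, h s.1 t.1 s.2 t.2]

/-- When `B∖{0}` is closed under multiplication, the product of nonzero elements is computed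
componentwise. -/
theorem insMul_some {A B : Type*} (addA : A → A → A) (mulB : B → B → B) (zB : B)
    (h : ∀ s t : B, s ≠ zB → t ≠ zB → mulB s t ≠ zB) (g k : A) (s t : {b : B // b ≠ zB}) :
    insMul addA mulB zB (some (g, s)) (some (k, t)) =
      some (addA g k, ⟨mulB s.1 t.1, h s.1 t.1 s.2 t.2⟩) := by
  simp [insMul, h s.1 t.1 s.2 t.2]

/-- Translations of an ordered abelian group are strictly monotone: the weak inequality required
by the definition is cancelled by translating back. -/
theorem IsOrdAbGroup.add_lt_iff {A : Type*} [LinearOrder A] {add : A → A → A} {zero : A}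
    {neg : A → A} (hA : IsOrdAbGroup add zero neg) (a b c : A) :
    add c a < add c b ↔ a < b := by
  obtain ⟨assoc, zl, -, -, nl, mono⟩ := hA
  rw [← not_le, ← not_le, not_iff_not]
  refine ⟨fun h => ?_, mono b a c⟩
  have := mono _ _ (neg c) h
  rwa [← assoc, ← assoc, nl, zl, zl] at this

theorem insAdd_assoc {A B : Type*} [LinearOrder A] (addB : B → B → B) (zB : B)
    (h : ∀ s t : B, s ≠ zB → t ≠ zB → addB s t ≠ zB)
    (assoc : ∀ a b c : B, addB (addB a b) c = addB a (addB b c)) (x y z : Ins A zB) :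
    insAdd addB zB (insAdd addB zB x y) z = insAdd addB zB x (insAdd addB zB y z) := by
  rcases x with _ | ⟨g, s⟩
  · simp only [insAdd_none_left]
  rcases y with _ | ⟨k, t⟩
  · simp only [insAdd_none_left, insAdd_none_right]
  rcases z with _ | ⟨l, u⟩
  · simp only [insAdd_none_right]
  rw [insAdd_some _ _ h g k, insAdd_some _ _ h k l]
  split_ifs <;> simp only [insAdd_some _ _ h] <;> grind

/-- If `A` is an ordered abelian group and `B` is an ordered semi-field, then `A ⊼ B`
is an ordered semi-field: an ordered commutative semi-ring in which every nonzero
element has a multiplicative inverse; explicitly the inverse of `(g,s)` is `(-g, s̄)`. -/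
theorem stmt5 {A B : Type*} [LinearOrder A] [LinearOrder B]
    (addA : A → A → A) (zA : A) (negA : A → A)
    (addB mulB : B → B → B) (zB oneB : B) (invB : B → B)
    (hA : IsOrdAbGroup addA zA negA)
    (hB : IsOrdCommSemiring addB mulB zB oneB)
    (honeB : oneB ≠ zB)
    (hinvB : ∀ s : B, s ≠ zB →
      invB s ≠ zB ∧ mulB s (invB s) = oneB ∧ mulB (invB s) s = oneB) :
    -- the order is total (trichotomous, transitive, irreflexive) with least element 0
    (∀ x y : Ins A zB, insLt zB x y ∨ x = y ∨ insLt zB y x) ∧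
    (∀ x y z : Ins A zB, insLt zB x y → insLt zB y z → insLt zB x z) ∧
    (∀ x : Ins A zB, ¬ insLt zB x x) ∧
    (∀ x : Ins A zB, insLe zB none x) ∧
    -- ordered abelian semi-group structure
    (∀ x y : Ins A zB, insAdd addB zB x y = insAdd addB zB y x) ∧
    (∀ x y z : Ins A zB,
      insAdd addB zB (insAdd addB zB x y) z = insAdd addB zB x (insAdd addB zB y z)) ∧
    (∀ x : Ins A zB, insAdd addB zB none x = x ∧ insAdd addB zB x none = x) ∧
    (∀ x y : Ins A zB, insLe zB y (insAdd addB zB x y)) ∧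
    -- multiplication: commutative, associative, identity (0,1), distributive, annihilator
    (∀ x y : Ins A zB, insMul addA mulB zB x y = insMul addA mulB zB y x) ∧
    (∀ x y z : Ins A zB,
      insMul addA mulB zB (insMul addA mulB zB x y) z =
        insMul addA mulB zB x (insMul addA mulB zB y z)) ∧
    (∀ x : Ins A zB, insMul addA mulB zB (some (zA, ⟨oneB, honeB⟩)) x = x ∧
      insMul addA mulB zB x (some (zA, ⟨oneB, honeB⟩)) = x) ∧
    (∀ x y z : Ins A zB,
      insMul addA mulB zB x (insAdd addB zB y z) =
        insAdd addB zB (insMul addA mulB zB x y) (insMul addA mulB zB x z)) ∧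
    (∀ x : Ins A zB, insMul addA mulB zB none x = none ∧ insMul addA mulB zB x none = none) ∧
    -- every nonzero element has a multiplicative inverse
    (∀ x : Ins A zB, x ≠ none → ∃ y : Ins A zB,
      insMul addA mulB zB x y = some (zA, ⟨oneB, honeB⟩) ∧
      insMul addA mulB zB y x = some (zA, ⟨oneB, honeB⟩)) ∧
    -- explicitly, the inverse of (g,s) is (-g, s̄)
    (∀ (g : A) (s : {b : B // b ≠ zB}),
      insMul addA mulB zB (some (g, s)) (some (negA g, ⟨invB s.1, (hinvB s.1 s.2).1⟩)) =
        some (zA, ⟨oneB, honeB⟩) ∧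
      insMul addA mulB zB (some (negA g, ⟨invB s.1, (hinvB s.1 s.2).1⟩)) (some (g, s)) =
        some (zA, ⟨oneB, honeB⟩)) := by
  have ltiff := hA.add_lt_iff
  obtain ⟨aassoc, azl, azr, acomm, anl, -⟩ := hA
  obtain ⟨⟨bassoc, -, -, bcomm, bpos, ble⟩, mcomm, massoc, m1l, m1r, dist, m0l, m0r⟩ := hB
  have hadd : ∀ s t : B, s ≠ zB → t ≠ zB → addB s t ≠ zB := fun s t _ ht h =>
    ht (le_antisymm (h ▸ ble s t) (bpos t))
  have hmul : ∀ s t : B, s ≠ zB → t ≠ zB → mulB s t ≠ zB := fun s t hs ht h => by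
    apply ht
    rw [← m1l t, ← (hinvB s hs).2.2, massoc, h, m0r]
  have hinv : ∀ (g : A) (s : {b : B // b ≠ zB}),
      insMul addA mulB zB (some (g, s)) (some (negA g, ⟨invB s.1, (hinvB s.1 s.2).1⟩)) =
        some (zA, ⟨oneB, honeB⟩) ∧
      insMul addA mulB zB (some (negA g, ⟨invB s.1, (hinvB s.1 s.2).1⟩)) (some (g, s)) =
        some (zA, ⟨oneB, honeB⟩) := by
    intro g s
    simp [insMul_some _ _ _ hmul, anl, acomm g, (hinvB s.1 s.2).2]
  refine ⟨?_, ?_, ?_, ?_, ?_, insAdd_assoc addB zB hadd bassoc,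
    fun x => ⟨insAdd_none_left _ _ x, insAdd_none_right _ _ x⟩, ?_, ?_, ?_, ?_, ?_,
    fun x => ⟨insMul_none_left _ _ _ x, insMul_none_right _ _ _ x⟩, ?_, hinv⟩
  · rintro (_ | ⟨g, s, hs⟩) (_ | ⟨k, t, ht⟩) <;> simp only [insLt] <;> try simp
    grind
  · rintro (_ | ⟨g, s, hs⟩) (_ | ⟨k, t, ht⟩) (_ | ⟨l, u, hu⟩) <;> simp only [insLt] <;> try simp
    grind
  · rintro (_ | ⟨g, s, hs⟩) <;> simp [insLt]
  · rintro (_ | ⟨g, s, hs⟩) <;> simp [insLe, insLt]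
  · rintro (_ | ⟨g, s⟩) (_ | ⟨k, t⟩) <;>
      try simp only [insAdd_none_left, insAdd_none_right]
    rw [insAdd_some _ _ hadd, insAdd_some _ _ hadd]
    rcases lt_trichotomy g k with h | rfl | h
    · simp [h, h.not_gt]
    · simp [bcomm t.1]
    · simp [h, h.not_gt]
  · rintro (_ | ⟨g, s⟩) (_ | ⟨k, t⟩) <;>
      try simp only [insAdd_none_left, insAdd_none_right]
    · exact Or.inr rfl
    · exact Or.inr rfl
    · exact Or.inl trivial
    rw [insAdd_some _ _ hadd]
    rcases lt_trichotomy g k with h | rfl | h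
    · simp [h, insLe]
    · rcases (ble s.1 t.1).lt_or_eq with h' | h'
      · simp [insLe, insLt, h']
      · simp [insLe, ← h']
    · simp [h, h.not_gt, insLe, insLt]
  · rintro (_ | ⟨g, s⟩) (_ | ⟨k, t⟩) <;>
      try simp only [insMul_none_left, insMul_none_right]
    simp [insMul_some _ _ _ hmul, acomm k, mcomm t.1]
  · rintro (_ | ⟨g, s⟩) (_ | ⟨k, t⟩) (_ | ⟨l, u⟩) <;>
      try simp only [insMul_none_left, insMul_none_right]
    simp only [insMul_some _ _ _ hmul, aassoc, massoc]
  · rintro (_ | ⟨g, s⟩) 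
    · exact ⟨insMul_none_right _ _ _ _, rfl⟩
    · simp [insMul_some _ _ _ hmul, azl, azr, m1l, m1r]
  · rintro (_ | ⟨g, s⟩) (_ | ⟨k, t⟩) (_ | ⟨l, u⟩) <;>
      try simp only [insMul_none_left, insMul_none_right, insAdd_none_left, insAdd_none_right]
    rw [insAdd_some _ _ hadd, insMul_some _ _ _ hmul, insMul_some _ _ _ hmul,
      insAdd_some _ _ hadd]
    simp only [ltiff]
    split_ifs <;> simp [insMul_some _ _ _ hmul, dist]
  · rintro (_ | ⟨g, s⟩) hx
    · exact absurd rfl hx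
    · exact ⟨_, hinv g s⟩
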